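/- Fix 1 ≤ p ≤ ∞ and integers d ≥ 1 and 1 ≤ k ≤ d with d = 2 or k = 1. Then H^p(𝕋^d) enjoys the contractive restriction property of dimension k if and only if p ≠ 2. -/

import Mathlib

open MeasureTheory
open scoped Classical ENNReal

noncomputable section

/-- The `d`-dimensional torus, modelled as `d` copies of `ℝ/ℤ`,
whose product `volume` measure is the normalized Haar measure. -/
abbrev Torus (d : ℕ) := Fin d → AddCircle (1 : ℝ)

/-- The character `z ↦ z^α` on the torus. -/
def torusChar {d : ℕ} (α : Fin d → ℤ) (x : Torus d) : ℂ :=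
  ∏ j, fourier (α j) (x j)

/-- The trigonometric polynomial with frequencies in `F` and coefficients `a`. -/
def trigPoly {d : ℕ} (F : Finset (Fin d → ℤ)) (a : (Fin d → ℤ) → ℂ) (x : Torus d) : ℂ :=
  ∑ α ∈ F, a α * torusChar α x

/-- The set `ℕ₀^d` of multi-indices with nonnegative entries. -/
def NN (d : ℕ) : Set (Fin d → ℤ) := {α | ∀ j, 0 ≤ α j}

/-- `Λ` is a coset in `ℤ^d`, i.e. a translate of a subgroup. -/
def IsCoset {d : ℕ} (Λ : Set (Fin d → ℤ)) : Prop :=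
  ∃ (x : Fin d → ℤ) (H : AddSubgroup (Fin d → ℤ)),
    Λ = (x + ·) '' (H : Set (Fin d → ℤ))

/-- `Λ` is a contractive projection set for `L^p(𝕋^d)`:
the projection onto frequencies in `Λ` is contractive on trigonometric polynomials. -/
def IsContractiveLp (d : ℕ) (p : ℝ≥0∞) (Λ : Set (Fin d → ℤ)) : Prop :=
  ∀ (F : Finset (Fin d → ℤ)) (a : (Fin d → ℤ) → ℂ),
    eLpNorm (trigPoly (F.filter (· ∈ Λ)) a) p volume ≤ eLpNorm (trigPoly F a) p volume

/-- `Γ` is a contractive projection set for `H^p(𝕋^d)`: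
the projection onto frequencies in `Γ` is contractive on analytic polynomials. -/
def IsContractiveHp (d : ℕ) (p : ℝ≥0∞) (Γ : Set (Fin d → ℤ)) : Prop :=
  ∀ F : Finset (Fin d → ℤ), ↑F ⊆ NN d → ∀ a : (Fin d → ℤ) → ℂ,
    eLpNorm (trigPoly (F.filter (· ∈ Γ)) a) p volume ≤ eLpNorm (trigPoly F a) p volume

/-- `Γ` has dimension `k`: the subgroup generated by the differences `γ - γ₀` has rank `k`. -/
def HasDim {d : ℕ} (Γ : Set (Fin d → ℤ)) (k : ℕ) : Prop :=
  ∀ γ₀ ∈ Γ, Module.finrank ℤ (Submodule.span ℤ ((· - γ₀) '' Γ)) = k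

/-- `H^p(𝕋^d)` enjoys the contractive restriction property of dimension `k`:
every `k`-dimensional contractive projection set for `H^p(𝕋^d)` is the restriction
of a coset in `ℤ^d` to `ℕ₀^d`. -/
def ContractiveRestrictionProperty (d : ℕ) (p : ℝ≥0∞) (k : ℕ) : Prop :=
  ∀ Γ : Set (Fin d → ℤ), Γ.Nonempty → Γ ⊆ NN d → HasDim Γ k → IsContractiveHp d p Γ →
    ∃ Λ : Set (Fin d → ℤ), IsCoset Λ ∧ Γ = Λ ∩ NN d

/-- The coset `Λ(Γ)` in `ℤ^d` generated by `Γ`. -/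
def cosetGen {d : ℕ} (Γ : Set (Fin d → ℤ)) : Set (Fin d → ℤ) :=
  ⋃ γ₀ ∈ Γ, (γ₀ + ·) '' (AddSubgroup.closure ((· - γ₀) '' Γ) : Set (Fin d → ℤ))

/-- The `n`-extension `E_n(Γ)`: all points of `Λ(Γ) ∩ ℕ₀^d` at distance at most `n` from `Γ`. -/
def Eext {d : ℕ} (n : ℕ) (Γ : Set (Fin d → ℤ)) : Set (Fin d → ℤ) :=
  {lam | lam ∈ cosetGen Γ ∩ NN d ∧ ∃ γ ∈ Γ, ∃ m : (Fin d → ℤ) →₀ ℤ,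
    (↑m.support : Set (Fin d → ℤ)) ⊆ Γ \ {γ} ∧
    lam = γ + ∑ α ∈ m.support, m α • (α - γ) ∧
    (∑ α ∈ m.support, max (m α) 0) ≤ (n : ℤ) ∧
    (∑ α ∈ m.support, max (-(m α)) 0) ≤ (n : ℤ)}

/-- Iterated `n`-extensions `E_n^k(Γ)`. -/
def EextIter {d : ℕ} (n : ℕ) : ℕ → Set (Fin d → ℤ) → Set (Fin d → ℤ)
  | 0, Γ => Eext n Γ
  | (k + 1), Γ => Eext n (EextIter n k Γ)

/-- The `n`-completion `E_n^∞(Γ)`. -/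
def EextInf {d : ℕ} (n : ℕ) (Γ : Set (Fin d → ℤ)) : Set (Fin d → ℤ) :=
  ⋃ k, EextIter n k Γ

/-!
Suppose a contractive projection set `Γ` contains `α`, `β`, `γ` but not `α + γ - β ∈ ℕ₀^d`. With
`u = z^(α-β)` and `v = z^(γ-β)`, contractivity says that the polynomials `1 + b v + a u` have no
larger norm than their perturbations `1 + b v + a u + t u v`. For `p = ∞` this fails at `a = b = 1`,
`t = -1`. For `p < ∞` the derivative in `t` vanishes at `t = 0` for every `a`; differentiating this
identity in `a` at `a = 0`, with `b = 1/2`, gives `∫ |1 + v/2|^(p-2) Re v = 0`, which holds only for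
`p = 2`, because the weight is a strictly monotone function of `Re v` and `Re v` has mean zero. So
`Γ` is closed under completing parallelograms in the positive cone, and in dimension one or in the
plane such sets are the restrictions of cosets. For `p = 2` every projection is contractive.
-/

section ParallelogramClosed

variable {G : Type*} [AddCommGroup G] [PartialOrder G] {S : Set G} {a b s γ : G}

/-- Stability under completing parallelograms within the positive cone. For `Γ ⊆ ℕ₀^d` this is
the condition that `Γ` equals its `1`-extension. -/
def IsParallelogramClosed (S : Set G) : Prop :=
  ∀ ⦃a⦄, a ∈ S → ∀ ⦃b⦄, b ∈ S → ∀ ⦃c⦄, c ∈ S → 0 ≤ a + c - b → a + c - b ∈ S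

/-- The sets cut out on the positive cone by the cosets of an ordered group. For `ℤ^d` these are
the restrictions `Λ ∩ ℕ₀^d` of cosets `Λ`. -/
def IsCosetRestriction (S : Set G) : Prop :=
  ∃ (x : G) (H : AddSubgroup G), S = (x + ·) '' (H : Set G) ∩ Set.Ici 0

lemma IsCosetRestriction.isParallelogramClosed (hS : IsCosetRestriction S) :
    IsParallelogramClosed S := by
  obtain ⟨x, H, rfl⟩ := hS
  rintro _ ⟨⟨a, ha, rfl⟩, -⟩ _ ⟨⟨b, hb, rfl⟩, -⟩ _ ⟨⟨c, hc, rfl⟩, -⟩ h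
  exact ⟨⟨a + c - b, H.sub_mem (H.add_mem ha hc) hb, by simp only; abel⟩, h⟩

lemma isCosetRestriction_of_sub_mem (hS0 : S ⊆ Set.Ici 0) (H : AddSubgroup G)
    (hSH : ∀ s ∈ S, s - γ ∈ H) (hHS : ∀ h ∈ H, 0 ≤ γ + h → γ + h ∈ S) :
    IsCosetRestriction S := by
  refine ⟨γ, H, Set.Subset.antisymm (fun s hs => ⟨⟨s - γ, hSH s hs, by simp⟩, hS0 hs⟩) ?_⟩
  rintro _ ⟨⟨h, hh, rfl⟩, h0⟩
  exact hHS h hh h0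

variable [IsOrderedAddMonoid G]

/-- Given differences `a - b` and `a' - b'`, an element `s` of `S` above `b + b'` can be translated
by both without leaving the cone, so the differences form a subgroup. -/
lemma IsParallelogramClosed.isCosetRestriction_of_isCofinal (hS : IsParallelogramClosed S)
    (hS0 : S ⊆ Set.Ici 0) (hcof : IsCofinal S) : IsCosetRestriction S := by
  obtain ⟨γ, hγ, -⟩ := hcof 0
  let H : AddSubgroup G :=
    { carrier := {v | ∃ a ∈ S, ∃ b ∈ S, v = a - b}
      zero_mem' := ⟨γ, hγ, γ, hγ, (sub_self γ).symm⟩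
      neg_mem' := by
        rintro _ ⟨a, ha, b, hb, rfl⟩
        exact ⟨b, hb, a, ha, neg_sub a b⟩
      add_mem' := by
        rintro _ _ ⟨a, ha, b, hb, rfl⟩ ⟨a', ha', b', hb', rfl⟩
        have a0 : 0 ≤ a := hS0 ha
        have a0' : 0 ≤ a' := hS0 ha'
        have b0' : 0 ≤ b' := hS0 hb'
        obtain ⟨s, hs, hbs⟩ := hcof (b + b')
        have hsa : s + a - b ∈ S := hS hs hb ha <| sub_nonneg.2 <|
          (le_add_of_nonneg_right b0').trans (hbs.trans (le_add_of_nonneg_right a0))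
        have hsaa : s + a - b + a' - b' ∈ S := by
          refine hS hsa hb' ha' ?_
          have h : 0 ≤ (s - (b + b')) + a + a' :=
            add_nonneg (add_nonneg (sub_nonneg.2 hbs) a0) a0'
          convert h using 1
          abel
        exact ⟨_, hsaa, s, hs, by abel⟩ }
  refine isCosetRestriction_of_sub_mem hS0 H (fun s hs => ⟨s, hs, γ, hγ, rfl⟩) ?_
  rintro _ ⟨a, ha, b, hb, rfl⟩ h
  rw [← add_sub_assoc] at h ⊢
  exact hS hγ hb ha h

variable [PosSMulReflectLE ℤ G]

lemma add_zsmul_nonneg_of_mem_Icc {x v : G} {l m n : ℤ} (hl : 0 ≤ x + l • v)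
    (hn : 0 ≤ x + n • v) (hm : m ∈ Set.Icc l n) : 0 ≤ x + m • v := by
  obtain ⟨hlm, hmn⟩ := hm
  rcases hlm.eq_or_lt with rfl | hlm
  · exact hl
  refine le_of_smul_le_smul_left (a := n - l) ?_ (by lia)
  calc (n - l) • (0 : G) = 0 := smul_zero _
    _ ≤ (n - m) • (x + l • v) + (m - l) • (x + n • v) :=
        add_nonneg (zsmul_nonneg hl (by lia)) (zsmul_nonneg hn (by lia))
    _ = (n - l) • (x + m • v) := by module

namespace IsParallelogramClosed

lemma add_nsmul_sub_mem (hS : IsParallelogramClosed S) (hS0 : S ⊆ Set.Ici 0) (ha : a ∈ S)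
    (hb : b ∈ S) (hs : s ∈ S) (n : ℕ) (h : 0 ≤ s + n • (a - b)) : s + n • (a - b) ∈ S := by
  induction n with
  | zero => simpa using hs
  | succ n ih =>
    have hn : 0 ≤ s + n • (a - b) := by
      have := add_zsmul_nonneg_of_mem_Icc (x := s) (v := a - b) (l := 0) (m := n) (n := (n + 1 : ℕ))
        (by simpa using hS0 hs) (by rwa [natCast_zsmul]) ⟨by lia, by lia⟩
      rwa [natCast_zsmul] at this
    have hstep : s + (n + 1) • (a - b) = s + n • (a - b) + a - b := by module
    rw [hstep] at h ⊢
    exact hS (ih hn) hb ha h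

lemma add_zsmul_sub_mem (hS : IsParallelogramClosed S) (hS0 : S ⊆ Set.Ici 0) (ha : a ∈ S)
    (hb : b ∈ S) (hs : s ∈ S) (n : ℤ) (h : 0 ≤ s + n • (a - b)) : s + n • (a - b) ∈ S := by
  obtain ⟨m, rfl | rfl⟩ := n.eq_nat_or_neg
  · rw [natCast_zsmul] at h ⊢
    exact hS.add_nsmul_sub_mem hS0 ha hb hs m h
  · have hneg : s + -(m : ℤ) • (a - b) = s + m • (b - a) := by module
    rw [hneg] at h ⊢
    exact hS.add_nsmul_sub_mem hS0 hb ha hs m h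

lemma isCosetRestriction_of_sub_mem_zmultiples (hS : IsParallelogramClosed S)
    (hS0 : S ⊆ Set.Ici 0) (ha : a ∈ S) (hb : b ∈ S) (hγ : γ ∈ S)
    (hgen : ∀ s ∈ S, s - γ ∈ AddSubgroup.zmultiples (a - b)) : IsCosetRestriction S := by
  refine isCosetRestriction_of_sub_mem hS0 _ hgen ?_
  rintro _ ⟨n, rfl⟩ h
  exact hS.add_zsmul_sub_mem hS0 ha hb hγ n h

/-- Euclidean division: when `a - b` has least positive height among the differences of `S`,
subtracting it from the higher of two elements until their heights differ by less than
`φ (a - b)` makes the heights, hence the elements, agree. -/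
lemma sub_mem_zmultiples_of_forall_le_sub (hS : IsParallelogramClosed S) (hS0 : S ⊆ Set.Ici 0)
    {φ : G →+ ℤ} (hφ : Set.InjOn φ S) (ha : a ∈ S) (hb : b ∈ S) (hba : φ b < φ a)
    (hgap : ∀ x ∈ S, ∀ y ∈ S, φ y < φ x → φ a - φ b ≤ φ x - φ y) {u u' : G} (hu : u ∈ S)
    (hu' : u' ∈ S) (huu' : φ u ≤ φ u')
    (hdescend : ∀ n : ℕ, φ u ≤ φ (u' + n • (b - a)) → 0 ≤ u' + n • (b - a)) :
    u' - u ∈ AddSubgroup.zmultiples (a - b) := by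
  obtain ⟨n, hn⟩ := Int.eq_ofNat_of_zero_le
    (Int.ediv_nonneg (sub_nonneg.2 huu') (sub_nonneg.2 hba.le))
  have hheight : φ (u' + n • (b - a)) = φ u + (φ u' - φ u) % (φ a - φ b) := by
    have := Int.mul_ediv_add_emod (φ u' - φ u) (φ a - φ b)
    rw [hn] at this
    simp only [map_add, map_nsmul, map_sub, nsmul_eq_mul]
    linear_combination -this
  have hrem := Int.emod_nonneg (φ u' - φ u) (sub_ne_zero.2 hba.ne')
  have hlt := Int.emod_lt_of_pos (φ u' - φ u) (sub_pos.2 hba)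
  have hv : u' + n • (b - a) ∈ S :=
    hS.add_nsmul_sub_mem hS0 hb ha hu' n (hdescend n (by lia))
  have heq : u' + n • (b - a) = u := by
    refine hφ hv hu (le_antisymm (not_lt.1 fun hlt' => ?_) (by lia))
    have := hgap _ hv u hu hlt'
    lia
  exact ⟨n, by simp only [← heq]; module⟩

lemma isCosetRestriction_of_injOn (hS : IsParallelogramClosed S) (hS0 : S ⊆ Set.Ici 0)
    (hne : S.Nonempty) (φ : G →+ ℤ) (hφ : Set.InjOn φ S)
    (hdescend : ∀ a ∈ S, ∀ b ∈ S, ∀ u ∈ S, ∀ u' ∈ S, φ b < φ a → ∀ n : ℕ,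
      φ u ≤ φ (u' + n • (b - a)) → 0 ≤ u' + n • (b - a)) :
    IsCosetRestriction S := by
  obtain ⟨γ, hγ⟩ := hne
  by_cases hex : ∃ x : G × G, (x.1 ∈ S ∧ x.2 ∈ S) ∧ φ x.2 < φ x.1
  swap
  · push Not at hex
    refine hS.isCosetRestriction_of_sub_mem_zmultiples hS0 hγ hγ hγ fun s hs => ?_
    have hsγ : s = γ := hφ hs hγ (le_antisymm (hex (s, γ) ⟨hs, hγ⟩) (hex (γ, s) ⟨hγ, hs⟩))
    simp [hsγ]
  obtain ⟨⟨a, b⟩, ⟨⟨ha, hb⟩, hba⟩, hmin⟩ :=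
    exists_minimalFor_of_wellFoundedLT _ (fun x : G × G => (φ x.1 - φ x.2).toNat) hex
  simp only at ha hb hba
  have hgap : ∀ x ∈ S, ∀ y ∈ S, φ y < φ x → φ a - φ b ≤ φ x - φ y := fun x hx y hy hyx => by
    have := @hmin (x, y) ⟨⟨hx, hy⟩, hyx⟩
    simp only at this
    lia
  have hdiv : ∀ u ∈ S, ∀ u' ∈ S, φ u ≤ φ u' → u' - u ∈ AddSubgroup.zmultiples (a - b) :=
    fun u hu u' hu' huu' => hS.sub_mem_zmultiples_of_forall_le_sub hS0 hφ ha hb hba hgap hu hu'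
      huu' (hdescend a ha b hb u hu u' hu' hba)
  refine hS.isCosetRestriction_of_sub_mem_zmultiples hS0 ha hb hγ fun s hs => ?_
  rcases le_total (φ γ) (φ s) with h | h
  · exact hdiv γ hγ s hs h
  · rw [← neg_sub γ s]
    exact neg_mem (hdiv s hs γ hγ h)

end IsParallelogramClosed

end ParallelogramClosed

section IntegerLattice

variable {ι : Type*} {S : Set (ι → ℤ)}

lemma add_zsmul_nonneg_of_apply_mem_Icc {x v : ι → ℤ} {j : ι} (hj : v j ≠ 0) {l m n : ℤ}
    (hl : 0 ≤ x + l • v) (hn : 0 ≤ x + n • v)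
    (hm : (x + m • v) j ∈ Set.Icc ((x + l • v) j) ((x + n • v) j)) : 0 ≤ x + m • v := by
  simp only [Set.mem_Icc, Pi.add_apply, Pi.smul_apply, smul_eq_mul, add_le_add_iff_left] at hm
  rcases lt_or_gt_of_ne hj with hj | hj
  · exact add_zsmul_nonneg_of_mem_Icc hn hl
      ⟨(mul_le_mul_right_of_neg hj).1 hm.2, (mul_le_mul_right_of_neg hj).1 hm.1⟩
  · exact add_zsmul_nonneg_of_mem_Icc hl hn
      ⟨(mul_le_mul_iff_left₀ hj).1 hm.1, (mul_le_mul_iff_left₀ hj).1 hm.2⟩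

lemma exists_apply_eq_of_not_injOn {α : Type*} [LinearOrder α] {S : Set (Fin 2 → α)} {i : Fin 2}
    (hinj : ¬ Set.InjOn (· i) S) : ∃ a ∈ S, ∃ b ∈ S, b i = a i ∧ ∀ j ≠ i, b j < a j := by
  simp only [Set.InjOn, not_forall] at hinj
  obtain ⟨a, ha, b, hb, hab, hne⟩ := hinj
  obtain ⟨j, hj⟩ := Function.ne_iff.1 hne
  have hji : j ≠ i := by rintro rfl; exact hj hab
  have hother : ∀ l ≠ i, l = j := fun l hl => by lia
  rcases lt_or_gt_of_ne hj with h | h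
  · exact ⟨b, hb, a, ha, hab, fun l hl => hother l hl ▸ h⟩
  · exact ⟨a, ha, b, hb, hab.symm, fun l hl => hother l hl ▸ h⟩

namespace IsParallelogramClosed

lemma isCosetRestriction_of_subset_line (hS : IsParallelogramClosed S) (hS0 : S ⊆ Set.Ici 0)
    {γ v : ι → ℤ} (hγ : γ ∈ S) (hline : ∀ s ∈ S, s - γ ∈ AddSubgroup.zmultiples v) :
    IsCosetRestriction S := by
  rcases eq_or_ne v 0 with rfl | hv
  · refine isCosetRestriction_of_sub_mem hS0 _ hline fun x hx _ => ?_
    rw [AddSubgroup.zmultiples_zero_eq_bot, AddSubgroup.mem_bot] at hx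
    rwa [hx, add_zero]
  obtain ⟨j, hj⟩ : ∃ j, v j ≠ 0 := Function.ne_iff.1 hv
  have hparam : ∀ s ∈ S, ∃ m : ℤ, s = γ + m • v := fun s hs =>
    (hline s hs).imp fun m hm => by rw [show m • v = s - γ from hm, add_sub_cancel]
  refine hS.isCosetRestriction_of_injOn hS0 ⟨γ, hγ⟩ (Pi.evalAddMonoidHom _ j) ?_ ?_
  · intro s hs s' hs' hss'
    obtain ⟨m, rfl⟩ := hparam s hs
    obtain ⟨n, rfl⟩ := hparam s' hs'
    obtain rfl : m = n := by simpa [hj] using hss'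
    rfl
  · intro a ha b hb u hu u' hu' hba n hn
    have hle : (u' + n • (b - a)) j ≤ u' j :=
      add_le_of_nonpos_right (nsmul_nonpos (sub_nonpos.2 hba.le) n)
    obtain ⟨l, rfl⟩ := hparam a ha
    obtain ⟨m, rfl⟩ := hparam b hb
    obtain ⟨i, rfl⟩ := hparam u hu
    obtain ⟨i', rfl⟩ := hparam u' hu'
    have hparam' : γ + i' • v + n • ((γ + m • v) - (γ + l • v)) =
        γ + (i' + n * (m - l)) • v := by module
    rw [hparam'] at hn hle ⊢
    exact add_zsmul_nonneg_of_apply_mem_Icc hj (hS0 hu) (hS0 hu') ⟨hn, hle⟩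

lemma isCosetRestriction_of_antitone_coordinate (hS : IsParallelogramClosed S)
    (hS0 : S ⊆ Set.Ici 0) (hne : S.Nonempty) (i : ι) (hinj : Set.InjOn (· i) S)
    (hanti : ∀ a ∈ S, ∀ b ∈ S, b i < a i → ∀ j ≠ i, a j ≤ b j) : IsCosetRestriction S := by
  refine hS.isCosetRestriction_of_injOn hS0 hne (Pi.evalAddMonoidHom _ i) hinj ?_
  intro a ha b hb u hu u' hu' hba n hn j
  rcases eq_or_ne j i with rfl | hj
  · exact (hS0 hu j).trans hn
  · exact add_nonneg (hS0 hu' j) (nsmul_nonneg (sub_nonneg.2 (hanti a ha b hb hba j hj)) n)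

variable {a b c e : ι → ℤ}

lemma isCofinal_of_add_lt_add [Finite ι] (hS : IsParallelogramClosed S) (hS0 : S ⊆ Set.Ici 0)
    (ha : a ∈ S) (hb : b ∈ S) (hc : c ∈ S) (he : e ∈ S) (hba : b ≤ a) (hec : e ≤ c)
    (hlt : ∀ i, b i + e i < a i + c i) : IsCofinal S := by
  intro x
  obtain ⟨M, hM⟩ := (Set.finite_range x).bddAbove
  let n := M.toNat
  have hn : ∀ i, x i ≤ n := fun i => (hM ⟨i, rfl⟩).trans (Int.self_le_toNat M)
  have hab0 : 0 ≤ n • (a - b) := nsmul_nonneg (sub_nonneg.2 hba) n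
  have hce0 : 0 ≤ n • (c - e) := nsmul_nonneg (sub_nonneg.2 hec) n
  have hs := hS.add_nsmul_sub_mem hS0 ha hb ha n (add_nonneg (hS0 ha) hab0)
  refine ⟨_, hS.add_nsmul_sub_mem hS0 hc he hs n (add_nonneg (hS0 hs) hce0), fun i => ?_⟩
  calc x i ≤ n * 1 := by simpa using hn i
    _ ≤ n * ((a i - b i) + (c i - e i)) := by gcongr; linarith [hlt i]
    _ ≤ a i + n * ((a i - b i) + (c i - e i)) := le_add_of_nonneg_left (hS0 ha i)
    _ = (a + n • (a - b) + n • (c - e)) i := by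
        simp only [Pi.add_apply, Pi.smul_apply, Pi.sub_apply, nsmul_eq_mul n (_ : ℤ)]; ring

/-- Two elements of a planar set that are strictly comparable, or two pairs parallel to the two
axes, generate translates tending to infinity; otherwise the set is a strictly decreasing graph. -/
lemma isCosetRestriction_of_fin_two {S : Set (Fin 2 → ℤ)} (hS : IsParallelogramClosed S)
    (hS0 : S ⊆ Set.Ici 0) (hne : S.Nonempty) : IsCosetRestriction S := by
  by_cases hstrict : ∃ a ∈ S, ∃ b ∈ S, ∀ i, b i < a i
  · obtain ⟨a, ha, b, hb, hba⟩ := hstrict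
    exact hS.isCosetRestriction_of_isCofinal hS0 <| hS.isCofinal_of_add_lt_add hS0 ha hb ha hb
      (fun i => (hba i).le) (fun i => (hba i).le) fun i => add_lt_add (hba i) (hba i)
  have hanti : ∀ i, ∀ a ∈ S, ∀ b ∈ S, b i < a i → ∀ j ≠ i, a j ≤ b j := by
    intro i a ha b hb hba j hji
    by_contra! hlt
    refine hstrict ⟨a, ha, b, hb, fun l => ?_⟩
    obtain rfl | rfl : l = i ∨ l = j := by lia
    exacts [hba, hlt]
  by_cases hinj : ∃ i, Set.InjOn (· i) S
  · obtain ⟨i, hi⟩ := hinj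
    exact hS.isCosetRestriction_of_antitone_coordinate hS0 hne i hi (hanti i)
  push Not at hinj
  obtain ⟨a, ha, b, hb, hba, hba'⟩ := exists_apply_eq_of_not_injOn (hinj 0)
  obtain ⟨c, hc, e, he, hec, hec'⟩ := exists_apply_eq_of_not_injOn (hinj 1)
  have hba1 := hba' 1 one_ne_zero
  have hec0 := hec' 0 zero_ne_one
  refine hS.isCosetRestriction_of_isCofinal hS0 <|
    hS.isCofinal_of_add_lt_add hS0 ha hb hc he ?_ ?_ ?_
  all_goals simp only [Pi.le_def, Fin.forall_fin_two]; lia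

end IsParallelogramClosed

lemma isCosetRestriction_iff {d : ℕ} {Γ : Set (Fin d → ℤ)} :
    IsCosetRestriction Γ ↔ ∃ Λ, IsCoset Λ ∧ Γ = Λ ∩ NN d :=
  ⟨fun ⟨x, H, h⟩ => ⟨_, ⟨x, H, rfl⟩, h⟩, fun ⟨_, ⟨x, H, hΛ⟩, h⟩ => ⟨x, H, hΛ ▸ h⟩⟩

lemma HasDim.exists_sub_mem_zmultiples {d : ℕ} {Γ : Set (Fin d → ℤ)} (hdim : HasDim Γ 1)
    {γ : Fin d → ℤ} (hγ : γ ∈ Γ) : ∃ v, ∀ s ∈ Γ, s - γ ∈ AddSubgroup.zmultiples v := by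
  obtain ⟨v, -, hv⟩ := finrank_eq_one_iff'.1 (hdim γ hγ)
  refine ⟨v, fun s hs => ?_⟩
  obtain ⟨n, hn⟩ := hv ⟨s - γ, Submodule.subset_span ⟨s, hs, rfl⟩⟩
  exact ⟨n, congrArg Subtype.val hn⟩

end IntegerLattice

section NormRpow

variable {E : Type*} [NormedAddCommGroup E] [InnerProductSpace ℝ E] {r : ℝ} {z : E}

lemma hasFDerivAt_norm_rpow_of_ne_zero (hz : z ≠ 0) :
    HasFDerivAt (fun x : E => ‖x‖ ^ r) ((r * ‖z‖ ^ (r - 2)) • innerSL ℝ z) z := by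
  have h := ((hasStrictFDerivAt_norm_sq z).rpow_const (p := r / 2) (by simp [hz])).hasFDerivAt
  convert! h using 0
  simp_rw [← Real.rpow_natCast_mul (norm_nonneg _), ← Nat.cast_smul_eq_nsmul ℝ, smul_smul]
  ring_nf

lemma contDiffOn_norm_rpow_compl_zero : ContDiffOn ℝ 1 (fun x : E => ‖x‖ ^ r) {0}ᶜ :=
  fun _ hx => ((contDiffAt_norm ℝ hx).rpow_const_of_ne (norm_ne_zero_iff.2 hx)).contDiffWithinAt

lemma contDiffOn_norm_rpow_mul_inner_compl_zero_prod :
    ContDiffOn ℝ 1 (fun q : E × E => ‖q.1‖ ^ (r - 2) * inner ℝ q.1 q.2) ({0}ᶜ ×ˢ Set.univ) :=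
  (contDiffOn_norm_rpow_compl_zero.comp contDiff_fst.contDiffOn fun _ hq => hq.1).mul
    (contDiff_fst.inner ℝ contDiff_snd).contDiffOn

lemma fderiv_norm_rpow_mul_inner (hz : z ≠ 0) (g h : E) :
    fderiv ℝ (fun q : E × E => ‖q.1‖ ^ (r - 2) * inner ℝ q.1 q.2) (z, h) (g, 0) =
      (r - 2) * ‖z‖ ^ (r - 4) * inner ℝ z g * inner ℝ z h + ‖z‖ ^ (r - 2) * inner ℝ g h := by
  have hfst := hasFDerivAt_fst (𝕜 := ℝ) (p := ((z, h) : E × E))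
  have hnorm := (hasFDerivAt_norm_rpow_of_ne_zero (r := r - 2) (z := (z, h).1) hz).comp (z, h) hfst
  have hmul : HasFDerivAt (fun q : E × E => ‖q.1‖ ^ (r - 2) * inner ℝ q.1 q.2) _ (z, h) :=
    hnorm.mul (hfst.inner ℝ hasFDerivAt_snd)
  rw [hmul.fderiv]
  simp only [Function.comp_apply, ContinuousLinearMap.fst_prod_snd, ContinuousLinearMap.comp_id,
    ContinuousLinearMap.smul_comp, ContinuousLinearMap.comp_apply, ContinuousLinearMap.coe_fst',
    add_apply, smul_apply, fderivInnerCLM_apply, coe_innerSL_apply, inner_zero_right, zero_add,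
    smul_eq_mul, show r - 2 - 2 = r - 4 by ring]
  ring

end NormRpow

section Variation

open Topology

variable {X : Type*} [TopologicalSpace X] [CompactSpace X]

lemma eventually_forall_add_smul_ne_zero {E : Type*} [NormedAddCommGroup E] [NormedSpace ℝ E]
    {f g : X → E} (hf : Continuous f) (hg : Continuous g) (hf0 : ∀ x, f x ≠ 0) :
    ∀ᶠ s : ℝ in 𝓝 0, ∀ x, f x + s • g x ≠ 0 := by
  have hopen : IsOpen {q : ℝ × X | f q.2 + q.1 • g q.2 ≠ 0} :=
    isOpen_compl_singleton.preimage (by fun_prop : Continuous fun q : ℝ × X => f q.2 + q.1 • g q.2)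
  simpa using isCompact_univ.eventually_forall_of_forall_eventually
    (P := fun s x => f x + s • g x ≠ 0) fun x _ =>
      hopen.mem_nhds (x := (0, x)) (by simpa using hf0 x)

variable [MeasurableSpace X] [OpensMeasurableSpace X] {μ : Measure X} [IsFiniteMeasure μ]

lemma integrable_of_continuous_compactSpace {E : Type*} [NormedAddCommGroup E] {f : X → E}
    (hf : Continuous f) : Integrable f μ :=
  hf.integrable_of_hasCompactSupport (.of_compactSpace f)

lemma hasDerivAt_integral_comp_add_smul {E : Type*} [NormedAddCommGroup E] [NormedSpace ℝ E]
    {U : Set E} (hU : IsOpen U) {ψ : E → ℝ} (hψ : ContDiffOn ℝ 1 ψ U) {f g : X → E}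
    (hf : Continuous f) (hg : Continuous g) (hfU : ∀ x, f x ∈ U) :
    HasDerivAt (fun s : ℝ => ∫ x, ψ (f x + s • g x) ∂μ) (∫ x, fderiv ℝ ψ (f x) (g x) ∂μ) 0 := by
  let line : ℝ × X → E := fun q => f q.2 + q.1 • g q.2
  let deriv : ℝ × X → ℝ := fun q => fderiv ℝ ψ (line q) (g q.2)
  have hline : Continuous line := by fun_prop
  have hderiv : ContinuousOn deriv (line ⁻¹' U) :=
    ((hψ.continuousOn_fderiv_of_isOpen hU le_rfl).comp hline.continuousOn fun _ h => h).clm_apply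
      (hg.comp continuous_snd).continuousOn
  have hline0 : ∀ x, line (0, x) = f x := fun x => by simp [line]
  have hderiv0 : Continuous fun x => deriv (0, x) :=
    hderiv.comp_continuous (by fun_prop) fun x => by simpa [hline0] using hfU x
  obtain ⟨C, hC⟩ := (isCompact_range hderiv0.norm).bddAbove
  let good : Set (ℝ × X) := line ⁻¹' U ∩ deriv ⁻¹' Metric.ball 0 (C + 1)
  have hgood : IsOpen good := hderiv.isOpen_inter_preimage (hU.preimage hline) Metric.isOpen_ball
  have hev : ∀ᶠ s : ℝ in 𝓝 0, ∀ x ∈ Set.univ, (s, x) ∈ good :=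
    isCompact_univ.eventually_forall_of_forall_eventually fun x _ => hgood.mem_nhds
      ⟨by simpa [hline0] using hfU x, by simpa using (hC ⟨x, rfl⟩).trans_lt (lt_add_one C)⟩
  have hψline : ∀ s : ℝ, (∀ x, line (s, x) ∈ U) → Continuous fun x => ψ (line (s, x)) :=
    fun s hs => hψ.continuousOn.comp_continuous (by fun_prop) hs
  have key := (hasDerivAt_integral_of_dominated_loc_of_deriv_le (μ := μ)
    (F := fun s x => ψ (line (s, x))) (F' := fun s x => deriv (s, x)) hev
    (hev.mono fun s hs => (hψline s fun x => (hs x trivial).1).aestronglyMeasurable)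
    (integrable_of_continuous_compactSpace (hψline 0 fun x => by simpa [hline0] using hfU x))
    hderiv0.aestronglyMeasurable
    (.of_forall fun x s hs => (mem_ball_zero_iff.1 (hs x trivial).2).le)
    (integrable_const (C + 1)) (.of_forall fun x s hs => ?_)).2
  · simpa [deriv, hline0] using key
  · have hψ' := ((hψ.differentiableOn one_ne_zero).differentiableAt
      (hU.mem_nhds (hs x trivial).1)).hasFDerivAt
    have hline' : HasDerivAt (fun s => line (s, x)) (g x) s := by
      simpa [line] using ((hasDerivAt_id s).smul_const (g x)).const_add (f x)
    exact hψ'.comp_hasDerivAt s hline'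

variable {E : Type*} [NormedAddCommGroup E] [InnerProductSpace ℝ E] {r : ℝ}

lemma integral_norm_rpow_mul_inner_eq_zero (hr : r ≠ 0) {f h : X → E} (hf : Continuous f)
    (hh : Continuous h) (hf0 : ∀ x, f x ≠ 0)
    (hmin : ∀ t : ℝ, ∫ x, ‖f x‖ ^ r ∂μ ≤ ∫ x, ‖f x + t • h x‖ ^ r ∂μ) :
    ∫ x, ‖f x‖ ^ (r - 2) * inner ℝ (f x) (h x) ∂μ = 0 := by
  have hlocal : IsLocalMin (fun t : ℝ => ∫ x, ‖f x + t • h x‖ ^ r ∂μ) 0 :=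
    .of_forall fun t => by simpa using hmin t
  have hderiv := hlocal.hasDerivAt_eq_zero <| hasDerivAt_integral_comp_add_smul
    isOpen_compl_singleton contDiffOn_norm_rpow_compl_zero hf hh hf0
  have hfderiv : ∀ x, fderiv ℝ (fun z : E => ‖z‖ ^ r) (f x) (h x) =
      r * (‖f x‖ ^ (r - 2) * inner ℝ (f x) (h x)) := fun x => by
    simp [(hasFDerivAt_norm_rpow_of_ne_zero (hf0 x)).fderiv, mul_assoc]
  simp only [hfderiv, integral_const_mul] at hderiv
  exact (mul_eq_zero.1 hderiv).resolve_left hr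

/-- The first variation in the direction `h` vanishes along the whole family `f + s • g`; this is
its derivative at `s = 0`. -/
lemma integral_second_variation_eq_zero (hr : r ≠ 0) {f g h : X → E} (hf : Continuous f)
    (hg : Continuous g) (hh : Continuous h) (hf0 : ∀ x, f x ≠ 0)
    (hmin : ∀ s t : ℝ, ∫ x, ‖f x + s • g x‖ ^ r ∂μ ≤ ∫ x, ‖f x + s • g x + t • h x‖ ^ r ∂μ) :
    ∫ x, ((r - 2) * ‖f x‖ ^ (r - 4) * inner ℝ (f x) (g x) * inner ℝ (f x) (h x) +
      ‖f x‖ ^ (r - 2) * inner ℝ (g x) (h x)) ∂μ = 0 := by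
  have hfirst : (fun s : ℝ => ∫ x, ‖f x + s • g x‖ ^ (r - 2) * inner ℝ (f x + s • g x) (h x) ∂μ)
      =ᶠ[𝓝 0] fun _ => 0 :=
    (eventually_forall_add_smul_ne_zero hf hg hf0).mono fun s hs =>
      integral_norm_rpow_mul_inner_eq_zero hr (by fun_prop) hh hs (hmin s)
  have hderiv := hasDerivAt_integral_comp_add_smul (μ := μ)
    (isOpen_compl_singleton.prod isOpen_univ)
    (contDiffOn_norm_rpow_mul_inner_compl_zero_prod (E := E) (r := r)) (hf.prodMk hh)
    (hg.prodMk continuous_const) (fun x => ⟨hf0 x, trivial⟩) (g := fun x => (g x, 0))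
  simp only [Prod.smul_mk, Prod.mk_add_mk, smul_zero, add_zero,
    fderiv_norm_rpow_mul_inner (hf0 _)] at hderiv
  exact hderiv.unique ((hasDerivAt_const _ _).congr_of_eventuallyEq hfirst)

end Variation

section Moments

lemma sum_second_variation_eq {r : ℝ} {z u : ℂ} (hz : z ≠ 0) (hu : ‖u‖ = 1) (v : ℂ) :
    ∑ c ∈ {1, Complex.I}, ((r - 2) * ‖z‖ ^ (r - 4) * inner ℝ z (c * u) * inner ℝ z (c * (u * v)) +
      ‖z‖ ^ (r - 2) * inner ℝ (c * u) (c * (u * v))) = r * (‖z‖ ^ (r - 2) * v.re) := by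
  have hu2 : u.re * u.re + u.im * u.im = 1 := by
    rw [← Complex.normSq_apply, ← Complex.sq_norm, hu, one_pow]
  have hpow : ‖z‖ ^ (r - 2) = ‖z‖ ^ (r - 4) * (z.re * z.re + z.im * z.im) := by
    rw [← Complex.normSq_apply, ← Complex.sq_norm, ← Real.rpow_natCast,
      ← Real.rpow_add (norm_pos_iff.2 hz)]
    congr 1
    push_cast
    ring
  rw [Finset.sum_pair (by simp [Complex.ext_iff])]
  simp only [Complex.inner, one_mul, hpow, map_mul, Complex.conj_I, Complex.mul_re, Complex.mul_im,
    Complex.conj_re, Complex.conj_im, Complex.I_re, Complex.I_im, Complex.neg_re, Complex.neg_im]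
  linear_combination (r * ‖z‖ ^ (r - 4) * (z.re * z.re + z.im * z.im) * v.re) * hu2

variable {X : Type*} [TopologicalSpace X] [CompactSpace X] [MeasurableSpace X]
  [OpensMeasurableSpace X] {μ : Measure X} [IsFiniteMeasure μ] {r : ℝ}

/-- Multiplying both directions by `c = 1` and `c = i` and adding, the second variations combine
into a multiple of `Re v`. -/
lemma integral_norm_rpow_mul_re_eq_zero (hr : r ≠ 0) {f u v : X → ℂ} (hf : Continuous f)
    (hu : Continuous u) (hv : Continuous v) (hf0 : ∀ x, f x ≠ 0) (hu1 : ∀ x, ‖u x‖ = 1)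
    (hmin : ∀ a t : ℂ, ∫ x, ‖f x + a * u x‖ ^ r ∂μ ≤
      ∫ x, ‖f x + a * u x + t * (u x * v x)‖ ^ r ∂μ) :
    ∫ x, ‖f x‖ ^ (r - 2) * (v x).re ∂μ = 0 := by
  have hvar : ∀ c : ℂ, ∫ x, ((r - 2) * ‖f x‖ ^ (r - 4) * inner ℝ (f x) (c * u x) *
      inner ℝ (f x) (c * (u x * v x)) +
        ‖f x‖ ^ (r - 2) * inner ℝ (c * u x) (c * (u x * v x))) ∂μ = 0 := fun c =>
    integral_second_variation_eq_zero hr hf (by fun_prop) (by fun_prop) hf0 fun s t => by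
      simpa only [Complex.real_smul, mul_assoc] using hmin (s * c) (t * c)
  have hpow : ∀ q : ℝ, Continuous fun x => ‖f x‖ ^ q := fun q =>
    hf.norm.rpow_const fun x => .inl (norm_ne_zero_iff.2 (hf0 x))
  have hsum : ∫ x, r * (‖f x‖ ^ (r - 2) * (v x).re) ∂μ = 0 := by
    simp only [← fun x => sum_second_variation_eq (r := r) (hf0 x) (hu1 x) (v x)]
    rw [integral_finsetSum _ fun c _ => integrable_of_continuous_compactSpace ?_]
    · exact Finset.sum_eq_zero fun c _ => hvar c
    · have := hpow (r - 2)
      have := hpow (r - 4)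
      fun_prop
  rw [integral_const_mul] at hsum
  exact (mul_eq_zero.1 hsum).resolve_left hr

lemma mul_rpow_sub_rpow_mul_sub_pos {s x y : ℝ} (hs : s ≠ 0) (hx : 0 < x) (hy : 0 < y)
    (hxy : x ≠ y) : 0 < s * ((x ^ s - y ^ s) * (x - y)) := by
  rcases lt_or_gt_of_ne hs with hs | hs <;> rcases lt_or_gt_of_ne hxy with h | h
  · exact mul_pos_of_neg_of_neg hs (mul_neg_of_pos_of_neg
      (sub_pos.2 (Real.rpow_lt_rpow_of_neg hx h hs)) (sub_neg.2 h))
  · exact mul_pos_of_neg_of_neg hs (mul_neg_of_neg_of_pos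
      (sub_neg.2 (Real.rpow_lt_rpow_of_neg hy h hs)) (sub_pos.2 h))
  · exact mul_pos hs (mul_pos_of_neg_of_neg
      (sub_neg.2 (Real.rpow_lt_rpow hx.le h hs)) (sub_neg.2 h))
  · exact mul_pos hs (mul_pos (sub_pos.2 (Real.rpow_lt_rpow hy.le h hs)) (sub_pos.2 h))

lemma norm_one_add_half_mul_sq {z : ℂ} (hz : ‖z‖ = 1) : ‖1 + 1 / 2 * z‖ ^ 2 = 5 / 4 + z.re := by
  have hz2 : z.re * z.re + z.im * z.im = 1 := by
    rw [← Complex.normSq_apply, ← Complex.sq_norm, hz, one_pow]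
  have hre : (1 + 1 / 2 * z).re = 1 + 1 / 2 * z.re := by simp
  have him : (1 + 1 / 2 * z).im = 1 / 2 * z.im := by simp
  rw [Complex.sq_norm, Complex.normSq_apply, hre, him]
  linear_combination (1 / 4) * hz2

lemma one_add_half_mul_ne_zero {z : ℂ} (hz : ‖z‖ = 1) : 1 + 1 / 2 * z ≠ 0 := by
  intro h
  have hnorm : ‖(1 : ℂ)‖ = ‖1 / 2 * z‖ :=
    (congrArg norm (eq_neg_of_add_eq_zero_left h)).trans (norm_neg _)
  norm_num [hz] at hnorm

lemma norm_one_add_half_rpow_sub_mul_re_pos (hr : r ≠ 0) {z : ℂ} (hz : ‖z‖ = 1)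
    (hre : z.re ≠ 0) : 0 < r / 2 * ((‖1 + 1 / 2 * z‖ ^ r - (5 / 4) ^ (r / 2)) * z.re) := by
  have hsq := norm_one_add_half_mul_sq hz
  have hrpow : ‖1 + 1 / 2 * z‖ ^ r = (5 / 4 + z.re) ^ (r / 2) := by
    rw [← hsq, ← Real.rpow_natCast_mul (norm_nonneg _), Nat.cast_ofNat,
      mul_div_cancel₀ r two_ne_zero]
  have hbase : 0 < 5 / 4 + z.re :=
    hsq ▸ pow_pos (norm_pos_iff.2 (one_add_half_mul_ne_zero hz)) 2
  simpa only [hrpow, add_sub_cancel_left] using mul_rpow_sub_rpow_mul_sub_pos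
    (div_ne_zero hr two_ne_zero) hbase (by norm_num : (0 : ℝ) < 5 / 4) (by simpa using hre)

/-- Since `∫ Re w = 0`, one may subtract the constant `(5 / 4) ^ (r / 2)` from `‖1 + w / 2‖ ^ r`;
the integrand then has constant sign. -/
lemma integral_norm_one_add_half_rpow_mul_re_ne_zero [μ.IsOpenPosMeasure] (hr : r ≠ 0)
    {w : X → ℂ} (hw : Continuous w) (hw1 : ∀ x, ‖w x‖ = 1) (hmean : ∫ x, (w x).re ∂μ = 0) {x₀ : X}
    (hx₀ : (w x₀).re ≠ 0) : ∫ x, ‖1 + 1 / 2 * w x‖ ^ r * (w x).re ∂μ ≠ 0 := by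
  let F : X → ℝ := fun x => r / 2 * ((‖1 + 1 / 2 * w x‖ ^ r - (5 / 4) ^ (r / 2)) * (w x).re)
  have hpow : Continuous fun x => ‖1 + 1 / 2 * w x‖ ^ r :=
    (by fun_prop : Continuous fun x => ‖1 + 1 / 2 * w x‖).rpow_const fun x =>
      .inl (norm_ne_zero_iff.2 (one_add_half_mul_ne_zero (hw1 x)))
  have hF : Continuous F := by fun_prop
  have hpos : ∀ x, (w x).re ≠ 0 → 0 < F x := fun x hx =>
    norm_one_add_half_rpow_sub_mul_re_pos hr (hw1 x) hx
  have hnonneg : 0 ≤ F := fun x => by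
    by_cases hx : (w x).re = 0
    · simp [F, hx]
    · exact (hpos x hx).le
  have hint : 0 < ∫ x, F x ∂μ := hF.integral_pos_of_hasCompactSupport_nonneg_nonzero
    (.of_compactSpace F) hnonneg (hpos x₀ hx₀).ne'
  have hF_eq : ∫ x, F x ∂μ = r / 2 * ∫ x, ‖1 + 1 / 2 * w x‖ ^ r * (w x).re ∂μ := by
    simp only [F, integral_const_mul, sub_mul]
    rw [integral_sub (integrable_of_continuous_compactSpace (by fun_prop))
      (integrable_of_continuous_compactSpace (by fun_prop)), integral_const_mul, hmean, mul_zero,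
      sub_zero]
  intro h
  rw [hF_eq, h, mul_zero] at hint
  exact hint.false

end Moments

section FourTerms

variable {X : Type*} [TopologicalSpace X] [MeasurableSpace X] {μ : Measure X}

lemma enorm_le_eLpNorm_top [μ.IsOpenPosMeasure] {E : Type*} [NormedAddCommGroup E] {f : X → E}
    (hf : Continuous f) (x : X) : ‖f x‖ₑ ≤ eLpNorm f ∞ μ := by
  have hclosed : IsClosed {y | ‖f y‖ₑ ≤ eLpNorm f ∞ μ} := isClosed_le hf.enorm continuous_const
  have hdense : Dense {y | ‖f y‖ₑ ≤ eLpNorm f ∞ μ} :=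
    Measure.dense_of_ae (eLpNorm_exponent_top (f := f) (μ := μ) ▸ ae_le_eLpNormEssSup)
  exact hclosed.closure_eq.subset (hdense x)

lemma norm_one_add_sub_mul_sq_le {z w : ℂ} (hz : ‖z‖ = 1) (hw : ‖w‖ = 1) :
    ‖1 + z + w - w * z‖ ^ 2 ≤ 8 := by
  have htri : ‖1 + z + w - w * z‖ ≤ ‖1 + z‖ + ‖1 - z‖ := calc
    ‖1 + z + w - w * z‖ = ‖(1 + z) + w * (1 - z)‖ := by ring_nf
    _ ≤ ‖1 + z‖ + ‖w * (1 - z)‖ := norm_add_le _ _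
    _ = ‖1 + z‖ + ‖1 - z‖ := by rw [norm_mul, hw, one_mul]
  have hpar := parallelogram_law_with_norm ℝ 1 z
  rw [hz, norm_one] at hpar
  calc ‖1 + z + w - w * z‖ ^ 2 ≤ (‖1 + z‖ + ‖1 - z‖) ^ 2 := by gcongr
    _ ≤ 2 * (‖1 + z‖ ^ 2 + ‖1 - z‖ ^ 2) := add_sq_le
    _ = 8 := by linear_combination 2 * hpar

lemma eLpNorm_top_one_add_add_sub_mul_lt [μ.IsOpenPosMeasure] {u v : X → ℂ} (hu : Continuous u)
    (hv : Continuous v) (hu1 : ∀ x, ‖u x‖ = 1) (hv1 : ∀ x, ‖v x‖ = 1) {x₀ : X} (hux₀ : u x₀ = 1)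
    (hvx₀ : v x₀ = 1) :
    eLpNorm (fun x => 1 + v x + u x - u x * v x) ∞ μ < eLpNorm (fun x => 1 + v x + u x) ∞ μ := by
  calc eLpNorm (fun x => 1 + v x + u x - u x * v x) ∞ μ ≤ ENNReal.ofReal √8 := by
        rw [eLpNorm_exponent_top]
        refine eLpNormEssSup_le_of_ae_bound (.of_forall fun x => Real.le_sqrt_of_sq_le ?_)
        exact norm_one_add_sub_mul_sq_le (hv1 x) (hu1 x)
    _ < ENNReal.ofReal 3 := by
        rw [ENNReal.ofReal_lt_ofReal_iff three_pos, Real.sqrt_lt' three_pos]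
        norm_num
    _ = ‖1 + v x₀ + u x₀‖ₑ := by
        rw [hux₀, hvx₀, ← ofReal_norm]
        norm_num
    _ ≤ eLpNorm (fun x => 1 + v x + u x) ∞ μ :=
        enorm_le_eLpNorm_top (f := fun x => 1 + v x + u x) (by fun_prop) x₀

variable [CompactSpace X] [OpensMeasurableSpace X] [IsFiniteMeasure μ] {p : ℝ≥0∞}

lemma integral_norm_rpow_le_of_eLpNorm_le (hp0 : p ≠ 0) (hp : p ≠ ∞) {E : Type*}
    [NormedAddCommGroup E] {f g : X → E} (hf : Continuous f) (hg : Continuous g)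
    (h : eLpNorm f p μ ≤ eLpNorm g p μ) :
    ∫ x, ‖f x‖ ^ p.toReal ∂μ ≤ ∫ x, ‖g x‖ ^ p.toReal ∂μ := by
  have hf_mem : MemLp f p μ := hf.memLp_of_hasCompactSupport (.of_compactSpace f)
  have hg_mem : MemLp g p μ := hg.memLp_of_hasCompactSupport (.of_compactSpace g)
  have hnonneg : ∀ f : X → E, 0 ≤ ∫ x, ‖f x‖ ^ p.toReal ∂μ :=
    fun f => integral_nonneg fun x => by positivity
  rw [hf_mem.eLpNorm_eq_integral_rpow_norm hp0 hp, hg_mem.eLpNorm_eq_integral_rpow_norm hp0 hp,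
    ENNReal.ofReal_le_ofReal_iff (Real.rpow_nonneg (hnonneg g) _)] at h
  exact (Real.rpow_le_rpow_iff (hnonneg f) (hnonneg g)
    (inv_pos.2 (ENNReal.toReal_pos hp0 hp))).1 h

lemma eq_two_of_forall_eLpNorm_le [μ.IsOpenPosMeasure] (hp0 : p ≠ 0) {u v : X → ℂ}
    (hu : Continuous u) (hv : Continuous v) (hu1 : ∀ x, ‖u x‖ = 1) (hv1 : ∀ x, ‖v x‖ = 1)
    (hv_mean : ∫ x, v x ∂μ = 0) {x₀ : X} (hux₀ : u x₀ = 1) (hvx₀ : v x₀ = 1)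
    (hmin : ∀ a b t : ℂ, eLpNorm (fun x => 1 + b * v x + a * u x) p μ ≤
      eLpNorm (fun x => 1 + b * v x + a * u x + t * (u x * v x)) p μ) : p = 2 := by
  have hp : p ≠ ∞ := by
    rintro rfl
    refine (eLpNorm_top_one_add_add_sub_mul_lt (μ := μ) hu hv hu1 hv1 hux₀ hvx₀).not_ge ?_
    simpa [sub_eq_add_neg] using hmin 1 1 (-1)
  by_contra hp2
  have hr : p.toReal - 2 ≠ 0 := sub_ne_zero.2 fun h => hp2 <| by
    rw [← ENNReal.ofReal_toReal hp, h, ENNReal.ofReal_ofNat]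
  have hre_mean : ∫ x, (v x).re ∂μ = 0 := by
    rw [show ∫ x, (v x).re ∂μ = (∫ x, v x ∂μ).re from
      integral_re (integrable_of_continuous_compactSpace hv), hv_mean, Complex.zero_re]
  refine integral_norm_one_add_half_rpow_mul_re_ne_zero hr hv hv1 hre_mean (x₀ := x₀)
    (by simp [hvx₀]) ?_
  exact integral_norm_rpow_mul_re_eq_zero (ENNReal.toReal_pos hp0 hp).ne' (by fun_prop) hu hv
    (fun x => one_add_half_mul_ne_zero (hv1 x)) hu1 fun a t =>
      integral_norm_rpow_le_of_eLpNorm_le hp0 hp (by fun_prop) (by fun_prop) (hmin a (1 / 2) t)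

end FourTerms

section Torus

variable {d : ℕ}

lemma torusChar_add (α β : Fin d → ℤ) (x : Torus d) :
    torusChar (α + β) x = torusChar α x * torusChar β x := by
  simp only [torusChar, Pi.add_apply, fourier_add, Finset.prod_mul_distrib]

lemma torusChar_neg (α : Fin d → ℤ) (x : Torus d) :
    torusChar (-α) x = starRingEnd ℂ (torusChar α x) := by
  simp only [torusChar, Pi.neg_apply, fourier_neg, map_prod]

@[fun_prop]
lemma continuous_torusChar (α : Fin d → ℤ) : Continuous (torusChar α) :=
  continuous_finsetProd _ fun j _ => (fourier (α j)).continuous.comp (continuous_apply j)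

lemma norm_torusChar (α : Fin d → ℤ) (x : Torus d) : ‖torusChar α x‖ = 1 := by
  simp only [torusChar, norm_prod, fourier_apply, Circle.norm_coe, Finset.prod_const_one]

lemma torusChar_apply_zero (α : Fin d → ℤ) : torusChar α 0 = 1 := by simp [torusChar]

lemma integral_torusChar (α : Fin d → ℤ) :
    ∫ x, torusChar α x = if α = 0 then 1 else 0 := by
  have hprod : ∫ x, torusChar α x = ∏ j, ∫ x : AddCircle (1 : ℝ), fourier (α j) x :=
    integral_fintype_prod_volume_eq_prod _
  rw [hprod]
  split_ifs with hα
  · simp [hα, Measure.real]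
  · obtain ⟨j, hj⟩ := Function.ne_iff.1 hα
    exact Finset.prod_eq_zero (Finset.mem_univ j) <|
      integral_eq_zero_of_add_right_eq_neg (fourier_add_half_inv_index hj one_pos)

lemma norm_sum_smul_le_of_orthonormal {𝕜 E ι : Type*} [RCLike 𝕜] [NormedAddCommGroup E]
    [InnerProductSpace 𝕜 E] {e : ι → E} (he : Orthonormal 𝕜 e) {s t : Finset ι} (hst : s ⊆ t)
    (a : ι → 𝕜) : ‖∑ i ∈ s, a i • e i‖ ≤ ‖∑ i ∈ t, a i • e i‖ := by
  have hparseval : ∀ u : Finset ι, ‖∑ i ∈ u, a i • e i‖ ^ 2 = ∑ i ∈ u, ‖a i‖ ^ 2 := fun u => by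
    simpa using he.orthogonalFamily.norm_sum a u
  refine le_of_sq_le_sq ?_ (norm_nonneg _)
  rw [hparseval, hparseval]
  exact Finset.sum_le_sum_of_subset_of_nonneg hst fun _ _ _ => by positivity

/-- The character `torusChar α` as an element of `L²(𝕋^d)`. -/
def torusCharLp (α : Fin d → ℤ) : Lp ℂ 2 (volume : Measure (Torus d)) :=
  ContinuousMap.toLp 2 volume ℂ ⟨torusChar α, continuous_torusChar α⟩

lemma orthonormal_torusCharLp : Orthonormal ℂ (torusCharLp (d := d)) := by
  rw [orthonormal_iff_ite]
  intro α β
  rw [torusCharLp, torusCharLp, ContinuousMap.inner_toLp]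
  simp only [ContinuousMap.coe_mk, ← torusChar_neg, ← torusChar_add, integral_torusChar]
  simp only [add_neg_eq_zero, eq_comm (a := β)]

lemma eLpNorm_trigPoly_two (F : Finset (Fin d → ℤ)) (a : (Fin d → ℤ) → ℂ) :
    eLpNorm (trigPoly F a) 2 volume = ‖∑ α ∈ F, a α • torusCharLp α‖ₑ := by
  have hsum : ∑ α ∈ F, a α • torusCharLp α =
      ContinuousMap.toLp 2 volume ℂ (∑ α ∈ F, a α • ⟨torusChar α, continuous_torusChar α⟩) := by
    simp only [map_sum, map_smul, torusCharLp]
  rw [hsum, Lp.enorm_def, eLpNorm_congr_ae (ContinuousMap.coeFn_toLp volume _)]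
  congr 1
  ext x
  simp [trigPoly]

lemma isContractiveHp_two (Γ : Set (Fin d → ℤ)) : IsContractiveHp d 2 Γ := fun F _ a => by
  rw [eLpNorm_trigPoly_two, eLpNorm_trigPoly_two, enorm_le_iff_norm_le]
  exact norm_sum_smul_le_of_orthonormal orthonormal_torusCharLp (Finset.filter_subset _ _) a

end Torus

section Contractive

variable {d : ℕ} {p : ℝ≥0∞} {Γ : Set (Fin d → ℤ)}

lemma IsContractiveHp.eLpNorm_le_add_smul_torusChar (hΓ : IsContractiveHp d p Γ) (hΓ0 : Γ ⊆ NN d)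
    {f : Torus d → ℂ} (hf : f ∈ Submodule.span ℂ (torusChar '' Γ)) {γ : Fin d → ℤ} (hγ : γ ∈ NN d)
    (hγΓ : γ ∉ Γ) (t : ℂ) : eLpNorm f p volume ≤ eLpNorm (f + t • torusChar γ) p volume := by
  obtain ⟨a, ha, rfl⟩ := (Finsupp.mem_span_image_iff_linearCombination ℂ).1 hf
  have hγa : γ ∉ a.support := fun h => hγΓ (ha h)
  have hupdate : ∀ α ∈ a.support, Function.update a γ t α = a α := fun α hα =>
    Function.update_of_ne (ne_of_mem_of_not_mem hα hγa) _ _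
  have hfilter : (insert γ a.support).filter (· ∈ Γ) = a.support := by
    rw [Finset.filter_insert, if_neg hγΓ]
    exact Finset.filter_true_of_mem ha
  have hproj : trigPoly a.support (Function.update a γ t) =
      Finsupp.linearCombination ℂ torusChar a := by
    ext x
    simp only [trigPoly, Finsupp.linearCombination_apply, Finsupp.sum, Finset.sum_apply,
      Pi.smul_apply, smul_eq_mul]
    exact Finset.sum_congr rfl fun α hα => by rw [hupdate α hα]
  have hpoly : trigPoly (insert γ a.support) (Function.update a γ t) =
      Finsupp.linearCombination ℂ torusChar a + t • torusChar γ := by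
    ext x
    rw [← hproj, trigPoly, Finset.sum_insert hγa, Function.update_self]
    exact add_comm _ _
  have hsubset : (↑(insert γ a.support) : Set (Fin d → ℤ)) ⊆ NN d := by
    rw [Finset.coe_insert]
    exact Set.insert_subset hγ (ha.trans hΓ0)
  simpa only [hfilter, hproj, hpoly] using hΓ _ hsubset (Function.update a γ t)

theorem IsContractiveHp.isParallelogramClosed (hΓ : IsContractiveHp d p Γ) (hΓ0 : Γ ⊆ NN d)
    (hp0 : p ≠ 0) (hp2 : p ≠ 2) : IsParallelogramClosed Γ := by
  intro α hα β hβ γ hγ hδ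
  by_contra hδΓ
  have hγβ : γ - β ≠ 0 := by
    rw [Ne, sub_eq_zero]
    rintro rfl
    exact hδΓ (by rwa [add_sub_cancel_right])
  refine hp2 <| eq_two_of_forall_eLpNorm_le (μ := (volume : Measure (Torus d))) hp0
    (continuous_torusChar (α - β)) (continuous_torusChar (γ - β)) (norm_torusChar _)
    (norm_torusChar _) ((integral_torusChar _).trans (if_neg hγβ)) (torusChar_apply_zero _)
    (torusChar_apply_zero _) fun a b t => ?_
  have hmem : torusChar β + b • torusChar γ + a • torusChar α ∈
      Submodule.span ℂ (torusChar '' Γ) := by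
    have hchar : ∀ η ∈ Γ, torusChar η ∈ Submodule.span ℂ (torusChar '' Γ) := fun η hη =>
      Submodule.subset_span ⟨η, hη, rfl⟩
    exact add_mem (add_mem (hchar β hβ) (Submodule.smul_mem _ b (hchar γ hγ)))
      (Submodule.smul_mem _ a (hchar α hα))
  have hle := hΓ.eLpNorm_le_add_smul_torusChar hΓ0 hmem hδ hδΓ t
  have hquot : ∀ η x, torusChar η x = torusChar β x * torusChar (η - β) x := fun η x => by
    rw [← torusChar_add, add_sub_cancel]
  have hpoly : ∀ x, (torusChar β + b • torusChar γ + a • torusChar α) x = torusChar β x *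
      (1 + b * torusChar (γ - β) x + a * torusChar (α - β) x) := fun x => by
    simp only [Pi.add_apply, Pi.smul_apply, smul_eq_mul, hquot γ, hquot α]
    ring
  have hsub : α + γ - β - β = (α - β) + (γ - β) := by abel
  convert hle using 1 <;> refine eLpNorm_congr_norm_ae (.of_forall fun x => ?_)
  · rw [hpoly, norm_mul, norm_torusChar, one_mul]
  · rw [Pi.add_apply, Pi.smul_apply, hpoly, smul_eq_mul, hquot (α + γ - β), hsub,
      torusChar_add, mul_left_comm t (torusChar β x), ← mul_add, norm_mul, norm_torusChar, one_mul]

end Contractive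

section Simplex

lemma span_image_sub_eq_span (R : Type*) {M : Type*} [Ring R] [AddCommGroup M] [Module R M]
    {s : Set M} (h0 : 0 ∈ s) {x : M} (hx : x ∈ s) :
    Submodule.span R ((· - x) '' s) = Submodule.span R s := by
  simpa only [vsub_eq_sub, sub_zero, Set.image_id'] using
    (vectorSpan_eq_span_vsub_set_right R hx).symm.trans (vectorSpan_eq_span_vsub_set_right R h0)

variable {d k : ℕ}

/-- The set `{0, e₁, …, eₖ}`, where `eⱼ` is the `j`-th standard basis vector of `ℤ^d`. For `1 ≤ k`
it is a `k`-dimensional subset of `ℕ₀^d` that is not the restriction of a coset. -/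
def latticeSimplex (hkd : k ≤ d) : Set (Fin d → ℤ) :=
  insert 0 (Set.range fun j : Fin k => Pi.single (Fin.castLE hkd j) 1)

lemma zero_mem_latticeSimplex (hkd : k ≤ d) : 0 ∈ latticeSimplex hkd := Set.mem_insert _ _

lemma latticeSimplex_subset_Icc (hkd : k ≤ d) : latticeSimplex hkd ⊆ Set.Icc 0 1 := by
  rintro _ (rfl | ⟨j, rfl⟩)
  · exact ⟨le_rfl, zero_le_one⟩
  · constructor <;> intro i <;> simp only [Pi.single_apply, Pi.zero_apply, Pi.one_apply] <;>
      split_ifs <;> simp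

lemma hasDim_latticeSimplex (hkd : k ≤ d) : HasDim (latticeSimplex hkd) k := fun γ hγ => by
  have hlin := (Pi.linearIndependent_single_one (Fin d) ℤ).comp _ (Fin.castLE_injective hkd)
  rw [span_image_sub_eq_span ℤ (zero_mem_latticeSimplex hkd) hγ, latticeSimplex,
    Submodule.span_insert_zero]
  exact (finrank_span_eq_card hlin).trans (Fintype.card_fin k)

lemma not_isParallelogramClosed_latticeSimplex (hk : 1 ≤ k) (hkd : k ≤ d) :
    ¬ IsParallelogramClosed (latticeSimplex hkd) := fun hclosed => by
  let i : Fin d := Fin.castLE hkd ⟨0, hk⟩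
  have hmem : Pi.single i 1 ∈ latticeSimplex hkd := Set.mem_insert_of_mem _ ⟨_, rfl⟩
  have hdouble : Pi.single i 1 + Pi.single i 1 - 0 ∈ latticeSimplex hkd := by
    refine hclosed hmem (zero_mem_latticeSimplex hkd) hmem ?_
    rw [sub_zero, ← Pi.single_add]
    exact Pi.single_nonneg.2 zero_le_two
  simpa using (latticeSimplex_subset_Icc hkd hdouble).2 i

end Simplex

theorem contractive_restriction_property_a_general (d k : ℕ) (hk : 1 ≤ k) (hkd : k ≤ d)
    (h : d = 2 ∨ k = 1) (p : ℝ≥0∞) (hp : p ≠ 0) :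
    ContractiveRestrictionProperty d p k ↔ p ≠ 2 := by
  constructor
  · rintro hprop rfl
    have hcoset : IsCosetRestriction (latticeSimplex hkd) := isCosetRestriction_iff.2 <|
      hprop _ ⟨0, zero_mem_latticeSimplex hkd⟩ (fun _ hγ => (latticeSimplex_subset_Icc hkd hγ).1)
        (hasDim_latticeSimplex hkd) (isContractiveHp_two _)
    exact not_isParallelogramClosed_latticeSimplex hk hkd hcoset.isParallelogramClosed
  · intro hp2 Γ hne hΓ0 hdim hΓ
    have hclosed := hΓ.isParallelogramClosed hΓ0 hp hp2
    rw [← isCosetRestriction_iff]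
    rcases h with rfl | rfl
    · exact hclosed.isCosetRestriction_of_fin_two hΓ0 hne
    · obtain ⟨γ, hγ⟩ := hne
      obtain ⟨v, hv⟩ := hdim.exists_sub_mem_zmultiples hγ
      exact hclosed.isCosetRestriction_of_subset_line hΓ0 hγ hv

/-- Theorem 2 (a): if `d = 2` or `k = 1`, then `H^p(𝕋^d)` enjoys the contractive
restriction property of dimension `k` iff `p ≠ 2`. -/
theorem contractive_restriction_property_a (d k : ℕ) (hd : 1 ≤ d) (hk : 1 ≤ k)
    (hkd : k ≤ d) (h : d = 2 ∨ k = 1) (p : ℝ≥0∞) (hp : 1 ≤ p) :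
    ContractiveRestrictionProperty d p k ↔ p ≠ 2 :=
  contractive_restriction_property_a_general d k hk hkd h p (zero_lt_one.trans_le hp).ne'

end
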